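/- Let X = X₁+X₂ with independent X₁, X₂ having densities of finite Fisher information, and suppose ∫ |p''(x) log p(x)| dx < ∞ where p is the density of X (with convention 0·log 0 = 0). Then I(X) = −∫ p''(x) log p(x) dx. -/

import Mathlib

open MeasureTheory Real Filter Topology

lemma aux_integrable_deriv (f f' : ℝ → ℝ) (hnn : ∀ x, 0 ≤ f x) (hint : Integrable f)
    (h1 : ∫ x, f x = 1)
    (hFTC : ∀ a b : ℝ, f b - f a = ∫ x in a..b, f' x)
    (hconv : ∀ x, f x = 0 → f' x = 0)
    (hI : IntegrableOn (fun x => (f' x) ^ 2 / f x) {x | 0 < f x}) : Integrable f' := by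
  have hloc : LocallyIntegrable f' := by
    by_contra hcon
    simp only [LocallyIntegrable, not_forall] at hcon
    obtain ⟨x0, hx0⟩ := hcon
    have key : ∀ x y, x < x0 → x0 < y → f y = f x := by
      intro x y hx hy
      have : ¬ IntervalIntegrable f' volume x y := by
        intro h
        rw [intervalIntegrable_iff_integrableOn_Ioc_of_le (hx.trans hy).le] at h
        exact hx0 ⟨_, Ioc_mem_nhds hx hy, h⟩
      have h2 := hFTC x y
      rw [intervalIntegral.integral_undef this] at h2
      linarith
    have hae : f =ᵐ[volume] fun _ => f (x0 + 1) := by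
      have : ∀ᵐ x : ℝ, x ≠ x0 := by simp [ae_iff]
      filter_upwards [this] with x hx
      rcases lt_or_gt_of_ne hx with h | h
      · exact (key x (x0 + 1) h (by linarith)).symm
      · rw [key (x0 - 1) x (by linarith) h, key (x0 - 1) (x0 + 1) (by linarith) (by linarith)]
    rw [integral_congr_ae hae] at h1
    have hc : Integrable (fun _ : ℝ => f (x0 + 1)) := hint.congr hae
    rw [integrable_const_iff] at hc
    rcases hc with h | h
    · simp [h] at h1
    · simpa using h.measure_univ_lt_top
  have hcont : Continuous f := by
    have h : f = fun x => f 0 + ∫ t in (0:ℝ)..x, f' t := by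
      ext x; rw [← hFTC]; ring
    rw [h]
    exact continuous_const.add (intervalIntegral.continuous_primitive (fun a b =>
      (hloc.integrableOn_isCompact isCompact_uIcc).intervalIntegrable) 0)
  have hmeas : MeasurableSet {x | 0 < f x} := measurableSet_lt measurable_const hcont.measurable
  have hI' := (integrable_indicator_iff hmeas).2 hI
  refine Integrable.mono' (hI'.add hint) hloc.aestronglyMeasurable (ae_of_all _ fun x => ?_)
  rcases (hnn x).eq_or_lt with h | h
  · simp [← h, hconv x h.symm]
  · simp only [Pi.add_apply]
    rw [Set.indicator_of_mem (by exact h), Real.norm_eq_abs, ← sq_abs]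
    have : |f' x| ^ 2 / f x + f x - |f' x| = ((|f' x| - f x)^2 + |f' x| * f x) / f x := by
      field_simp; ring
    have : 0 ≤ ((|f' x| - f x)^2 + |f' x| * f x) / f x := by positivity
    linarith

lemma aux_cont (f f' : ℝ → ℝ) (hf' : Integrable f')
    (hFTC : ∀ a b : ℝ, f b - f a = ∫ x in a..b, f' x) : Continuous f := by
  have h : f = fun x => f 0 + ∫ t in (0:ℝ)..x, f' t := by
    ext x; rw [← hFTC]; ring
  rw [h]
  exact continuous_const.add (intervalIntegral.continuous_primitive (fun a b =>
    hf'.intervalIntegrable) 0)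

lemma aux_bdd (f f' : ℝ → ℝ) (hf' : Integrable f')
    (hFTC : ∀ a b : ℝ, f b - f a = ∫ x in a..b, f' x) : ∃ M, ∀ x, |f x| ≤ M := by
  refine ⟨|f 0| + ∫ x, |f' x|, fun x => ?_⟩
  have h : f x = f 0 + ∫ t in (0:ℝ)..x, f' t := by rw [← hFTC]; ring
  rw [h]
  refine (abs_add_le _ _).trans (add_le_add le_rfl ?_)
  rw [← Real.norm_eq_abs]
  refine intervalIntegral.norm_integral_le_integral_norm_uIoc.trans ?_
  exact setIntegral_le_integral hf'.norm (ae_of_all _ fun _ => norm_nonneg _)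

lemma aux_tendsto (f f' : ℝ → ℝ) (hf : Integrable f) (hf' : Integrable f')
    (hFTC : ∀ a b : ℝ, f b - f a = ∫ x in a..b, f' x) :
    Tendsto f atTop (𝓝 0) ∧ Tendsto f atBot (𝓝 0) := by
  have e : ∀ x, f x = f 0 + ∫ t in (0:ℝ)..x, f' t := by intro x; rw [← hFTC]; ring
  constructor
  · have A : Tendsto f atTop (𝓝 (f 0 + ∫ t in Set.Ioi (0:ℝ), f' t)) := by
      refine Tendsto.congr (fun x => (e x).symm) (tendsto_const_nhds.add ?_)
      exact intervalIntegral_tendsto_integral_Ioi 0 hf'.integrableOn tendsto_id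
    have B := IntegrableAtFilter.eq_zero_of_tendsto (μ := volume)
      (hf.integrableAtFilter atTop) ?_ A
    · rwa [B] at A
    · intro s hs
      rcases mem_atTop_sets.1 hs with ⟨b, hb⟩
      rw [← top_le_iff, ← volume_Ici (a := b)]
      exact measure_mono hb
  · have A : Tendsto f atBot (𝓝 (f 0 - ∫ t in Set.Iic (0:ℝ), f' t)) := by
      refine Tendsto.congr (fun x => (?_ : f 0 - (∫ t in x..0, f' t) = f x))
        (tendsto_const_nhds.sub ?_)
      · rw [← hFTC]; ring
      exact intervalIntegral_tendsto_integral_Iic 0 hf'.integrableOn tendsto_id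
    have B := IntegrableAtFilter.eq_zero_of_tendsto (μ := volume)
      (hf.integrableAtFilter atBot) ?_ A
    · rwa [B] at A
    · intro s hs
      rcases mem_atBot_sets.1 hs with ⟨b, hb⟩
      rw [← top_le_iff, ← volume_Iic (a := b)]
      exact measure_mono hb

lemma aux_conv_prod (f g : ℝ → ℝ) (hf : Integrable f) (hg : Integrable g) :
    Integrable (fun q : ℝ × ℝ => f (q.1 - q.2) * g q.2) (volume.prod volume) := by
  simpa [mul_comm] using hg.convolution_integrand (.mul ℝ ℝ) hf

lemma aux_conv_int (f g : ℝ → ℝ) (hf : Integrable f) (hg : Integrable g) :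
    Integrable (fun x => ∫ y, f (x - y) * g y) :=
  (aux_conv_prod f g hf hg).integral_prod_left

lemma aux_conv_FTC (f f' g : ℝ → ℝ) (hf' : Integrable f') (hg : Integrable g)
    (hFTC : ∀ a b : ℝ, f b - f a = ∫ x in a..b, f' x) (a b : ℝ) :
    (∫ y, f (b - y) * g y) - (∫ y, f (a - y) * g y)
      = ∫ x in a..b, ∫ y, f' (x - y) * g y := by
  have hc := aux_cont f f' hf' hFTC
  obtain ⟨M, hM⟩ := aux_bdd f f' hf' hFTC
  have hi : ∀ c, Integrable (fun y => f (c - y) * g y) := fun c =>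
    hg.bdd_mul (c := M) (by fun_prop) (ae_of_all _ fun y => hM _)
  rw [← integral_sub (hi b) (hi a)]
  have h1 : ∀ y, f (b - y) * g y - f (a - y) * g y = ∫ x in a..b, f' (x - y) * g y := by
    intro y
    rw [intervalIntegral.integral_mul_const, intervalIntegral.integral_comp_sub_right, ← hFTC]
    ring
  simp_rw [h1]
  have hprod := aux_conv_prod f' g hf' hg
  simp_rw [intervalIntegral.intervalIntegral_eq_integral_uIoc, smul_eq_mul]
  rw [integral_const_mul]
  congr 1
  refine integral_integral_swap (f := fun y x => f' (x - y) * g y) ?_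
  refine Integrable.swap (f := fun q : ℝ × ℝ => f' (q.1 - q.2) * g q.2) ?_
  exact hprod.mono_measure (Measure.prod_mono Measure.restrict_le_self le_rfl)

lemma aux_parts (p p' p'' : ℝ → ℝ) (hpnn : ∀ x, 0 ≤ p x)
    (hp'i : Integrable p') (hp''i : Integrable p'')
    (hF : ∀ a b : ℝ, p b - p a = ∫ x in a..b, p' x)
    (hF' : ∀ a b : ℝ, p' b - p' a = ∫ x in a..b, p'' x) (ε : ℝ) (hε : 0 < ε) :
    ∫ x, p' x ^ 2 / (p x + ε) = - ∫ x, p'' x * Real.log (p x + ε) := by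
  have hpc := aux_cont p p' hp'i hF
  have hp'c := aux_cont p' p'' hp''i hF'
  obtain ⟨M, hM⟩ := aux_bdd p p' hp'i hF
  obtain ⟨M', hM'⟩ := aux_bdd p' p'' hp''i hF'
  have hpos : ∀ x, 0 < p x + ε := fun x => by linarith [hpnn x]
  have hderiv : ∀ x, HasDerivAt p (p' x) x := by
    intro x
    have h : p = fun x => p 0 + ∫ t in (0:ℝ)..x, p' t := by
      ext x; rw [← hF]; ring
    rw [h]
    exact (intervalIntegral.integral_hasDerivAt_right hp'i.intervalIntegrable
      (hp'c.stronglyMeasurableAtFilter _ _) hp'c.continuousAt).const_add _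
  set g : ℝ → ℝ := fun x => Real.log (p x + ε) with hg
  have hgd : ∀ x, HasDerivAt g (p' x / (p x + ε)) x := fun x =>
    ((hderiv x).add_const ε).log (hpos x).ne'
  have hgc : Continuous g := (hpc.add continuous_const).log fun x => (hpos x).ne'
  have hgdc : Continuous (fun x => p' x / (p x + ε)) :=
    hp'c.div (hpc.add continuous_const) fun x => (hpos x).ne'
  have hgd' : deriv g = fun x => p' x / (p x + ε) := funext fun x => (hgd x).deriv
  have hgb : ∀ x, |g x| ≤ |Real.log ε| + |Real.log (M + ε)| := by
    intro x
    have h1 : Real.log ε ≤ g x := Real.log_le_log hε (by linarith [hpnn x])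
    have h2 : g x ≤ Real.log (M + ε) :=
      Real.log_le_log (hpos x) (by linarith [le_abs_self (p x), hM x])
    rw [abs_le]
    constructor
    · linarith [neg_abs_le (Real.log ε), abs_nonneg (Real.log (M + ε))]
    · linarith [abs_nonneg (Real.log ε), le_abs_self (Real.log (M + ε))]
  have hi1 : Integrable (fun x => p' x * (p' x / (p x + ε))) := by
    refine hp'i.mul_bdd (c := M' / ε) hgdc.aestronglyMeasurable (ae_of_all _ fun x => ?_)
    rw [Real.norm_eq_abs, abs_div, abs_of_pos (hpos x)]
    exact div_le_div₀ ((abs_nonneg _).trans (hM' x)) (hM' x) hε (by linarith [hpnn x])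
  have hi2 : Integrable (fun x => p'' x * g x) :=
    hp''i.mul_bdd hgc.aestronglyMeasurable (ae_of_all _ hgb)
  have hac1 : ∀ a b, AbsolutelyContinuousOnInterval p' a b := by
    intro a b
    have h : p' = (fun _ => p' a) + fun x => ∫ t in a..x, p'' t := by
      ext x; simp only [Pi.add_apply]; rw [← hF']; ring
    rw [h]
    refine AbsolutelyContinuousOnInterval.add ?_ (IntervalIntegrable.absolutelyContinuousOnInterval_intervalIntegral hp''i.intervalIntegrable Set.left_mem_uIcc)
    exact ContDiffOn.absolutelyContinuousOnInterval contDiffOn_const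
  have hac2 : ∀ a b, AbsolutelyContinuousOnInterval g a b := by
    intro a b
    refine ContDiffOn.absolutelyContinuousOnInterval (ContDiff.contDiffOn ?_)
    rw [contDiff_one_iff_deriv]
    exact ⟨fun x => (hgd x).differentiableAt, by rw [hgd']; exact hgdc⟩
  have hae : ∀ᵐ x, deriv p' x = p'' x := by
    filter_upwards [LocallyIntegrable.ae_hasDerivAt_integral hp''i.locallyIntegrable] with x hx
    have h : p' = fun x => p' 0 + ∫ t in (0:ℝ)..x, p'' t := by
      ext x; rw [← hF']; ring
    rw [h]
    exact ((hx 0).const_add _).deriv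
  have key : ∀ n : ℝ, ∫ x in (-n)..n, p' x * (p' x / (p x + ε))
      = p' n * g n - p' (-n) * g (-n) - ∫ x in (-n)..n, p'' x * g x := by
    intro n
    have := (hac1 (-n) n).integral_mul_deriv_eq_deriv_mul (hac2 (-n) n)
    rw [hgd'] at this
    rw [this]
    congr 1
    apply intervalIntegral.integral_congr_ae
    filter_upwards [hae] with x hx _
    rw [hx]
  obtain ⟨t1, t2⟩ := aux_tendsto p' p'' hp'i hp''i hF'
  have L1 := intervalIntegral_tendsto_integral hi1 tendsto_neg_atTop_atBot tendsto_id
  have L2 := intervalIntegral_tendsto_integral hi2 tendsto_neg_atTop_atBot tendsto_id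
  have z : ∀ (l : Filter ℝ), Tendsto p' l (𝓝 0) → Tendsto (fun x => p' x * g x) l (𝓝 0) := by
    intro l hl
    refine squeeze_zero_norm (a := fun x => |p' x| * (|Real.log ε| + |Real.log (M + ε)|)) ?_ ?_
    · intro x
      rw [norm_mul]
      exact mul_le_mul_of_nonneg_left (hgb x) (norm_nonneg _)
    · simpa using hl.abs.mul_const (|Real.log ε| + |Real.log (M + ε)|)
  have L3 := ((z _ t1).sub ((z _ t2).comp tendsto_neg_atTop_atBot)).sub L2
  have := tendsto_nhds_unique (L1.congr key) L3
  simp only [sub_zero, zero_sub] at this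
  rw [← this]
  congr 1; ext x; ring

/-- Let `X = X₁ + X₂` with independent `X₁, X₂` having densities `p₁, p₂` of finite Fisher
information, and let `p = p₁ ⋆ p₂`, `p' = p₁' ⋆ p₂`, `p'' = p₁' ⋆ p₂'` be the density of `X`
and its derivatives. If `∫ |p''(x) log p(x)| dx < ∞` (with the convention `0 log 0 = 0`,
consistent with `Real.log 0 = 0` and with `p'' = 0` on `{p = 0}`), then
`I(X) = -∫ p''(x) log p(x) dx`. -/
theorem fisher_eq_neg_integral_second_deriv_log
    (p₁ p₂ p₁' p₂' : ℝ → ℝ)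
    (hnn₁ : ∀ x, 0 ≤ p₁ x) (hint₁ : Integrable p₁) (h1₁ : ∫ x, p₁ x = 1)
    (hnn₂ : ∀ x, 0 ≤ p₂ x) (hint₂ : Integrable p₂) (h1₂ : ∫ x, p₂ x = 1)
    (hFTC₁ : ∀ a b : ℝ, p₁ b - p₁ a = ∫ x in a..b, p₁' x)
    (hFTC₂ : ∀ a b : ℝ, p₂ b - p₂ a = ∫ x in a..b, p₂' x)
    (hconv₁ : ∀ x, p₁ x = 0 → p₁' x = 0)
    (hconv₂ : ∀ x, p₂ x = 0 → p₂' x = 0)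
    (hI₁fin : IntegrableOn (fun x => (p₁' x) ^ 2 / p₁ x) {x | 0 < p₁ x})
    (hI₂fin : IntegrableOn (fun x => (p₂' x) ^ 2 / p₂ x) {x | 0 < p₂ x})
    (p p' p'' : ℝ → ℝ)
    (hp : ∀ x, p x = ∫ y, p₁ (x - y) * p₂ y)
    (hp' : ∀ x, p' x = ∫ y, p₁' (x - y) * p₂ y)
    (hp'' : ∀ x, p'' x = ∫ y, p₁' (x - y) * p₂' y)
    (hlog : Integrable (fun x => |p'' x * Real.log (p x)|)) :
    ∫ x in {x | 0 < p x}, (p' x) ^ 2 / p x = -∫ x, p'' x * Real.log (p x) := by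
  have hp₁'i := aux_integrable_deriv p₁ p₁' hnn₁ hint₁ h1₁ hFTC₁ hconv₁ hI₁fin
  have hp₂'i := aux_integrable_deriv p₂ p₂' hnn₂ hint₂ h1₂ hFTC₂ hconv₂ hI₂fin
  have hc₁ := aux_cont p₁ p₁' hp₁'i hFTC₁
  have hc₂ := aux_cont p₂ p₂' hp₂'i hFTC₂
  obtain ⟨M₁, hM₁⟩ := aux_bdd p₁ p₁' hp₁'i hFTC₁
  have hpi : Integrable p := by
    rw [funext hp]; exact aux_conv_int _ _ hint₁ hint₂
  have hp'i : Integrable p' := by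
    rw [funext hp']; exact aux_conv_int _ _ hp₁'i hint₂
  have hp''i : Integrable p'' := by
    rw [funext hp'']; exact aux_conv_int _ _ hp₁'i hp₂'i
  have hpnn : ∀ x, 0 ≤ p x := fun x => by
    rw [hp]; exact integral_nonneg fun y => mul_nonneg (hnn₁ _) (hnn₂ _)
  have hF : ∀ a b : ℝ, p b - p a = ∫ x in a..b, p' x := by
    intro a b
    rw [hp, hp, aux_conv_FTC p₁ p₁' p₂ hp₁'i hint₂ hFTC₁]
    simp_rw [hp']
  have hF' : ∀ a b : ℝ, p' b - p' a = ∫ x in a..b, p'' x := by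
    have e1 : ∀ x, p' x = ∫ y, p₂ (x - y) * p₁' y := by
      intro x
      rw [hp', ← integral_sub_left_eq_self _ _ x]
      simp [mul_comm]
    have e2 : ∀ x, p'' x = ∫ y, p₂' (x - y) * p₁' y := by
      intro x
      rw [hp'', ← integral_sub_left_eq_self _ _ x]
      simp [mul_comm]
    intro a b
    rw [e1, e1, aux_conv_FTC p₂ p₂' p₁' hp₂'i hp₁'i hFTC₂]
    simp_rw [e2]
  have hz : ∀ x, p x = 0 → ∀ y, p₁ (x - y) = 0 ∨ p₂ y = 0 := by
    intro x hx y
    rw [hp, integral_eq_zero_iff_of_nonneg (fun y => mul_nonneg (hnn₁ _) (hnn₂ _))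
      (hint₂.bdd_mul (c := M₁) (by fun_prop) (ae_of_all _ fun y => hM₁ _))] at hx
    have h := congrFun ((Continuous.ae_eq_iff_eq volume
      ((hc₁.comp (continuous_const.sub continuous_id)).mul hc₂) continuous_zero).1 hx) y
    simpa using h
  have hz' : ∀ x, p x = 0 → p' x = 0 := by
    intro x hx
    rw [hp', ← integral_zero ℝ ℝ]
    congr 1; ext y
    rcases hz x hx y with h | h
    · simp [hconv₁ _ h]
    · simp [h]
  have hz'' : ∀ x, p x = 0 → p'' x = 0 := by
    intro x hx
    rw [hp'', ← integral_zero ℝ ℝ]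
    congr 1; ext y
    rcases hz x hx y with h | h
    · simp [hconv₁ _ h]
    · simp [hconv₂ _ h]
  have hpc := aux_cont p p' hp'i hF
  have hp'c := aux_cont p' p'' hp''i hF'
  obtain ⟨M, hM⟩ := aux_bdd p p' hp'i hF
  have hM0 : 0 ≤ M := (abs_nonneg _).trans (hM 0)
  set ε : ℕ → ℝ := fun n => 1 / ((n : ℝ) + 1) with hεdef
  have hε : ∀ n, 0 < ε n := fun n => Nat.one_div_pos_of_nat
  have hε1 : ∀ n, ε n ≤ 1 := fun n => by
    simp only [hεdef]
    rw [div_le_one (by positivity)]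
    have : (0:ℝ) ≤ n := n.cast_nonneg
    linarith
  have hεlim : Tendsto ε atTop (𝓝 0) := tendsto_one_div_add_atTop_nhds_zero_nat
  have hεanti : ∀ m n, m ≤ n → ε n ≤ ε m := fun m n h => Nat.one_div_le_one_div h
  have hparts := fun n => aux_parts p p' p'' hpnn hp'i hp''i hF hF' (ε n) (hε n)
  have hlim : ∀ x, Tendsto (fun n => p x + ε n) atTop (𝓝 (p x)) := fun x => by
    simpa using hεlim.const_add (p x)
  have hR : Tendsto (fun n => ∫ x, p'' x * Real.log (p x + ε n)) atTop
      (𝓝 (∫ x, p'' x * Real.log (p x))) := by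
    refine tendsto_integral_of_dominated_convergence
      (fun x => |p'' x * Real.log (p x)| + |p'' x| * Real.log (M + 1)) ?_ ?_ ?_ ?_
    · intro n
      exact hp''i.aestronglyMeasurable.mul
        ((hpc.add continuous_const).log fun x => by
          have := hpnn x; have := hε n; exact (add_pos_of_nonneg_of_pos (hpnn x) (hε n)).ne').aestronglyMeasurable
    · exact hlog.add (hp''i.abs.mul_const _)
    · intro n
      refine ae_of_all _ fun x => ?_
      rcases (hpnn x).eq_or_lt with h | h
      · simp [hz'' x h.symm]
      · rw [norm_mul, abs_mul, ← mul_add]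
        refine mul_le_mul_of_nonneg_left ?_ (abs_nonneg _)
        have a1 : Real.log (p x) ≤ Real.log (p x + ε n) :=
          Real.log_le_log h (by linarith [hε n])
        have a2 : Real.log (p x + ε n) ≤ Real.log (M + 1) :=
          Real.log_le_log (by linarith [hε n]) (by linarith [hε1 n, hM x, le_abs_self (p x)])
        have a3 : 0 ≤ Real.log (M + 1) := Real.log_nonneg (by linarith)
        rw [Real.norm_eq_abs, abs_le]
        constructor
        · linarith [neg_abs_le (Real.log (p x))]
        · linarith [abs_nonneg (Real.log (p x))]
    · refine ae_of_all _ fun x => ?_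
      rcases (hpnn x).eq_or_lt with h | h
      · simp [hz'' x h.symm]
      · exact ((hlim x).log h.ne').const_mul _
  have hL : Tendsto (fun n => ∫ x, p' x ^ 2 / (p x + ε n)) atTop
      (𝓝 (-∫ x, p'' x * Real.log (p x))) := by
    simp_rw [hparts]
    exact hR.neg
  have hnnF : ∀ n x, 0 ≤ p' x ^ 2 / (p x + ε n) := fun n x => by
    have := hpnn x; have := hε n; positivity
  have hcF : ∀ n, Continuous fun x => p' x ^ 2 / (p x + ε n) := fun n =>
    (hp'c.pow 2).div (hpc.add continuous_const) fun x => by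
      have := hpnn x; have := hε n; positivity
  obtain ⟨M', hM'⟩ := aux_bdd p' p'' hp''i hF'
  have hiF : ∀ n, Integrable fun x => p' x ^ 2 / (p x + ε n) := by
    intro n
    refine Integrable.mono' (hp'i.abs.mul_const (M' / ε n)) (hcF n).aestronglyMeasurable
      (ae_of_all _ fun x => ?_)
    rw [Real.norm_of_nonneg (hnnF n x), ← sq_abs, pow_two, mul_div_assoc]
    exact mul_le_mul_of_nonneg_left (div_le_div₀ ((abs_nonneg _).trans (hM' x)) (hM' x) (hε n)
      (by linarith [hpnn x])) (abs_nonneg _)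
  rw [setIntegral_eq_integral_of_forall_compl_eq_zero (fun x hx => by
    have : p x = 0 := le_antisymm (not_lt.1 hx) (hpnn x)
    simp [this])]
  have hnnG : ∀ x, 0 ≤ p' x ^ 2 / p x := fun x => by
    have := hpnn x; positivity
  have hmono := lintegral_tendsto_of_tendsto_of_monotone (μ := (volume : Measure ℝ))
    (f := fun n x => ENNReal.ofReal (p' x ^ 2 / (p x + ε n)))
    (F := fun x => ENNReal.ofReal (p' x ^ 2 / p x))
    (fun n => (hcF n).measurable.ennreal_ofReal.aemeasurable)
    (ae_of_all _ fun x m n h => ENNReal.ofReal_le_ofReal (by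
      have := hpnn x; have := hε n
      exact div_le_div_of_nonneg_left (sq_nonneg _) (by positivity) (by linarith [hεanti m n h])))
    (ae_of_all _ fun x => by
      refine ENNReal.tendsto_ofReal ?_
      rcases (hpnn x).eq_or_lt with h | h
      · simp [hz' x h.symm]
      · exact tendsto_const_nhds.div (hlim x) h.ne')
  have hL' := ENNReal.tendsto_ofReal hL
  have he : ∀ n, ENNReal.ofReal (∫ x, p' x ^ 2 / (p x + ε n))
      = ∫⁻ x, ENNReal.ofReal (p' x ^ 2 / (p x + ε n)) := fun n =>
    ofReal_integral_eq_lintegral_ofReal (hiF n) (ae_of_all _ (hnnF n))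
  have huniq := tendsto_nhds_unique hmono (hL'.congr he)
  rw [integral_eq_lintegral_of_nonneg_ae (ae_of_all _ hnnG)
    ((hp'c.measurable.pow_const 2).div hpc.measurable).aestronglyMeasurable, huniq]
  exact ENNReal.toReal_ofReal (ge_of_tendsto' hL fun n => integral_nonneg (hnnF n))
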